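/- Let n ≥ 5 be odd and let S be the Specht Z₂𝔖_n-lattice for (n−2,1,1) with basis {b(i₁,i₂) : 2 ≤ i₁ < i₂ ≤ n}. Then the set S₂ = { x ∈ S : all coefficients of x in this basis are congruent mod 2 } equals Z₂·(Σ_{2≤i₁<i₂≤n} b(i₁,i₂)) + 2S, is a Z₂𝔖_n-submodule of S containing 2S, and has Z₂-basis {Σ_{2≤j₁<j₂≤n} b(j₁,j₂)} ∪ {2·b(i₁,i₂) : (i₁,i₂) ≠ (n−1,n)}. -/

import Mathlib

open Finset

noncomputable section

/-- The `R`-linear map `⋀^k(f)` induced by `f`. -/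
def exteriorPowerMap {R M N : Type*} [CommRing R] [AddCommGroup M] [Module R M]
    [AddCommGroup N] [Module R N] (k : ℕ) (f : M →ₗ[R] N) : ⋀[R]^k M →ₗ[R] ⋀[R]^k N :=
  LinearMap.restrict (ExteriorAlgebra.map f).toLinearMap (p := ⋀[R]^k M) (q := ⋀[R]^k N)
    (fun x hx => by
      have h1 : Submodule.map (ExteriorAlgebra.map f).toLinearMap (⋀[R]^k M) ≤ ⋀[R]^k N := by
        rw [Submodule.map_pow]
        refine pow_le_pow_left' ?_ k
        rw [ExteriorAlgebra.ι_range_map_map]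
        exact LinearMap.map_le_range
      exact h1 (Submodule.mem_map_of_mem hx))

/-- The wedge `x ∧ y` in `⋀^2(M)`. -/
def wedgePair {R M : Type*} [CommRing R] [AddCommGroup M] [Module R M]
    (x y : M) : ⋀[R]^2 M :=
  ⟨ExteriorAlgebra.ιMulti R 2 ![x, y],
    ExteriorAlgebra.ιMulti_range R 2 (Set.mem_range_self _)⟩

variable (R : Type*) [CommRing R] (n : ℕ)

/-- The coefficient-sum functional on the natural permutation module. -/
def sumFunctional : (Fin n → R) →ₗ[R] R := ∑ i, LinearMap.proj i

/-- The natural Specht lattice `S^{(n-1,1)}`, realized as the kernel of the coefficient-sum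
functional on the natural permutation module. -/
def spechtW : Submodule R (Fin n → R) := LinearMap.ker (sumFunctional R n)

/-- The standard basis vector `e(1,i) = b_i − b_1` of the natural Specht lattice
(with `0`-based indices, index `0` playing the role of `1`). -/
def spechtE (h0 : 0 < n) (i : Fin n) : ↥(spechtW R n) :=
  ⟨Pi.single i 1 - Pi.single (⟨0, h0⟩ : Fin n) 1, by
    simp [spechtW, sumFunctional, LinearMap.mem_ker, Finset.sum_sub_distrib,
      Finset.sum_pi_single']⟩

/-- The action of `σ ∈ 𝔖_n` on the natural Specht lattice. -/
def spechtPerm (σ : Equiv.Perm (Fin n)) : ↥(spechtW R n) →ₗ[R] ↥(spechtW R n) :=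
  LinearMap.restrict (LinearMap.funLeft R R ⇑σ⁻¹)
    (fun x hx => by
      simp only [spechtW, LinearMap.mem_ker, sumFunctional, LinearMap.sum_apply,
        LinearMap.proj_apply, LinearMap.funLeft_apply] at hx ⊢
      rw [Equiv.sum_comp σ⁻¹ x]
      exact hx)

/-- The standard basis vector `b(i,j) = e(1,i) ∧ e(1,j)` of the Specht lattice
`S^{(n-2,1,1)} = ⋀²(S^{(n-1,1)})`. -/
def spechtBB (h0 : 0 < n) (i j : Fin n) : ⋀[R]^2 ↥(spechtW R n) :=
  wedgePair (spechtE R n h0 i) (spechtE R n h0 j)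

/-- The index set `{(i₁,i₂) : 2 ≤ i₁ < i₂ ≤ n}` of the standard basis of `S^{(n-2,1,1)}`
(`0`-based indices). -/
def PairIdx := {q : Fin n × Fin n // 0 < q.1.val ∧ q.1.val < q.2.val}

instance : Fintype (PairIdx n) := by unfold PairIdx; infer_instance
instance : DecidableEq (PairIdx n) := by unfold PairIdx; infer_instance

/-- The pair `(n-1, n)` (in `0`-based indices: `(n-2, n-1)`). -/
def pairMax (hn : 4 ≤ n) : PairIdx n :=
  ⟨(⟨n - 2, by omega⟩, ⟨n - 1, by omega⟩), ⟨show 0 < n - 2 by omega, show n - 2 < n - 1 by omega⟩⟩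

section Aux

theorem aux_abstract {R M ι : Type*} [CommRing R] [IsDomain R] (h2 : (2 : R) ≠ 0)
    [AddCommGroup M] [Module R M] [Fintype ι] [DecidableEq ι] (b : ι → M) (m : ι)
    (hli : LinearIndependent R b) (hsp : Submodule.span R (Set.range b) = ⊤)
    {G : Type*} (F : G → M →ₗ[R] M)
    (hF : ∀ g, ∃ y, F g (∑ q, b q) = ∑ q, b q + (2 : R) • y) :
    ∃ S₂ : Submodule R M,
      (S₂ : Set M) = {x | ∃ α : ι → R, x = ∑ q, α q • b q ∧ ∀ q, ∃ c : R, α q = α m + 2 * c} ∧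
      S₂ = Submodule.span R {∑ q, b q} ⊔ Ideal.span {(2 : R)} • (⊤ : Submodule R M) ∧
      Ideal.span {(2 : R)} • (⊤ : Submodule R M) ≤ S₂ ∧
      (∀ g, ∀ x ∈ S₂, F g x ∈ S₂) ∧
      LinearIndependent R (fun q => if q = m then ∑ r, b r else (2 : R) • b q) ∧
      Submodule.span R (Set.range (fun q => if q = m then ∑ r, b r else (2 : R) • b q)) = S₂ := by
  have hmem : ∀ x, x ∈ Submodule.span R {∑ q, b q} ⊔ Ideal.span {(2 : R)} • (⊤ : Submodule R M) ↔
      ∃ (c : R) (y : M), x = c • ∑ q, b q + (2 : R) • y := by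
    intro x
    rw [Submodule.ideal_span_singleton_smul, Submodule.mem_sup]
    constructor
    · rintro ⟨u, hu, v, hv, rfl⟩
      obtain ⟨c, rfl⟩ := Submodule.mem_span_singleton.1 hu
      obtain ⟨y, -, rfl⟩ := (Submodule.mem_smul_pointwise_iff_exists _ _ _).1 hv
      exact ⟨c, y, rfl⟩
    · rintro ⟨c, y, rfl⟩
      exact ⟨_, Submodule.mem_span_singleton.2 ⟨c, rfl⟩, _,
        (Submodule.mem_smul_pointwise_iff_exists _ _ _).2 ⟨y, trivial, rfl⟩, rfl⟩
  have hrep : ∀ y : M, ∃ β : ι → R, y = ∑ q, β q • b q := by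
    intro y
    have hy : y ∈ Submodule.span R (Set.range b) := hsp ▸ trivial
    obtain ⟨β, hβ⟩ := (Submodule.mem_span_range_iff_exists_fun R).1 hy
    exact ⟨β, hβ.symm⟩
  refine ⟨_, ?_, rfl, le_sup_right, ?_, ?_, ?_⟩
  · ext x
    rw [SetLike.mem_coe, hmem]
    constructor
    · rintro ⟨c, y, rfl⟩
      obtain ⟨β, rfl⟩ := hrep y
      refine ⟨fun q => c + 2 * β q, ?_, fun q => ⟨β q - β m, by ring⟩⟩
      simp only [add_smul, mul_smul, Finset.sum_add_distrib, Finset.smul_sum]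
    · rintro ⟨α, rfl, hα⟩
      choose c hc using hα
      refine ⟨α m, ∑ q, c q • b q, ?_⟩
      simp only [Finset.smul_sum, ← Finset.sum_add_distrib, smul_smul, ← add_smul]
      exact Finset.sum_congr rfl fun q _ => by rw [← hc q]
  · intro g x hx
    rw [hmem] at hx ⊢
    obtain ⟨c, y, rfl⟩ := hx
    obtain ⟨z, hz⟩ := hF g
    refine ⟨c, c • z + F g y, ?_⟩
    rw [map_add, map_smul, map_smul, hz, smul_add, smul_add, smul_comm c (2 : R) z, add_assoc]
  · rw [Fintype.linearIndependent_iff]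
    intro g hg
    have key : ∑ q, (g m + if q = m then 0 else 2 * g q) • b q = 0 := by
      rw [← hg]
      simp only [add_smul, Finset.sum_add_distrib, ← Finset.smul_sum]
      rw [← Finset.add_sum_erase _ (fun q => (if q = m then 0 else 2 * g q) • b q)
          (Finset.mem_univ m),
        ← Finset.add_sum_erase _ (fun q => g q • if q = m then ∑ r, b r else (2 : R) • b q)
          (Finset.mem_univ m)]
      simp only [if_true, zero_smul, zero_add]
      congr 1
      · refine Finset.sum_congr rfl fun q hq => ?_
        rw [if_neg (Finset.ne_of_mem_erase hq), if_neg (Finset.ne_of_mem_erase hq), smul_smul,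
          mul_comm]
    have h0 := Fintype.linearIndependent_iff.1 hli _ key
    have hm : g m = 0 := by simpa using h0 m
    intro q
    by_cases hq : q = m
    · rw [hq, hm]
    · have := h0 q
      rw [if_neg hq, hm, zero_add] at this
      exact (mul_eq_zero.1 this).resolve_left h2
  · apply le_antisymm
    · rw [Submodule.span_le]
      rintro _ ⟨q, rfl⟩
      rw [SetLike.mem_coe, hmem]
      by_cases hq : q = m
      · exact ⟨1, 0, by simp [hq]⟩
      · exact ⟨0, b q, by simp [hq]⟩
    · set N := Submodule.span R (Set.range (fun q => if q = m then ∑ r, b r else (2 : R) • b q))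
      have hT : ∑ r, b r ∈ N := Submodule.subset_span ⟨m, by simp⟩
      have h1 : ∀ q, q ≠ m → (2 : R) • b q ∈ N := fun q hq =>
        Submodule.subset_span ⟨q, by simp [hq]⟩
      have h1' : ∀ q, (2 : R) • b q ∈ N := by
        intro q
        by_cases hq : q = m
        · subst hq
          have : (2 : R) • b q = (2 : R) • ∑ r, b r - ∑ r ∈ Finset.univ.erase q, (2 : R) • b r := by
            rw [← Finset.add_sum_erase _ _ (Finset.mem_univ q), smul_add, Finset.smul_sum]
            abel
          rw [this]
          exact N.sub_mem (N.smul_mem _ hT)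
            (N.sum_mem fun r hr => h1 r (Finset.ne_of_mem_erase hr))
        · exact h1 q hq
      intro x hx
      obtain ⟨c, y, rfl⟩ := (hmem x).1 hx
      obtain ⟨β, rfl⟩ := hrep y
      refine N.add_mem (N.smul_mem _ hT) ?_
      rw [Finset.smul_sum]
      refine N.sum_mem fun q _ => ?_
      rw [smul_comm]
      exact N.smul_mem _ (h1' q)

theorem aux_perm {Q : Type*} [AddCommGroup Q] (hQ : ∀ x : Q, x + x = 0) (n : ℕ) (hodd : Odd n)
    (f : Fin n → Fin n → Q) (hs : ∀ i j, f i j = f j i) (s : Fin n)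
    (σ : Equiv.Perm (Fin n)) :
    ∑ p : Fin n × Fin n with p.1 < p.2, (f (σ p.1) (σ p.2) - f (σ p.1) s - f s (σ p.2)) =
      ∑ p : Fin n × Fin n with p.1 < p.2, f p.1 p.2 := by
  have hA : ∀ h : Fin n → Fin n → Q, ∀ hh : ∀ i j, h i j = h j i,
      ∑ p : Fin n × Fin n with p.1 < p.2, h p.1 p.2 =
      ∑ i : Sym2 (Fin n) with ¬ i.IsDiag, Sym2.lift ⟨h, hh⟩ i := by
    intro h hh
    have := Finset.sum_sym2_filter_not_isDiag (Finset.univ : Finset (Fin n)) (Sym2.lift ⟨h, hh⟩)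
    rw [Finset.sym2_univ] at this
    rw [this]
    refine Finset.sum_congr ?_ fun p _ => rfl
    ext p
    simp only [Finset.mem_filter, Finset.mem_univ, true_and, Finset.mem_offDiag]
    exact ⟨fun h => ⟨h.ne, h⟩, fun h => h.2⟩
  have h1 : ∑ p : Fin n × Fin n with p.1 < p.2, f (σ p.1) (σ p.2) =
      ∑ p : Fin n × Fin n with p.1 < p.2, f p.1 p.2 := by
    rw [hA (fun i j => f (σ i) (σ j)) (fun i j => hs _ _), hA f hs]
    refine Finset.sum_bijective (Sym2.map σ) (Finite.injective_iff_bijective.1 (Sym2.map.injective σ.injective)) ?_ ?_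
    · intro i
      induction i with | _ i j => simp
    · intro i _
      induction i with | _ i j => simp
  have h2 : ∑ p : Fin n × Fin n with p.1 < p.2, (f (σ p.1) s + f s (σ p.2)) = 0 := by
    rw [Finset.sum_add_distrib]
    have h3 : ∑ p : Fin n × Fin n with p.1 < p.2, f s (σ p.2) =
        ∑ p : Fin n × Fin n with p.2 < p.1, f (σ p.1) s := by
      refine Finset.sum_equiv (Equiv.prodComm _ _) ?_ ?_
      · intro p; simp
      · intro p _; simp [hs s]
    rw [h3, ← Finset.sum_union (by
      rw [Finset.disjoint_filter]; intro p _ h h'; exact absurd h (not_lt.2 h'.le))]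
    have h4 : (({p : Fin n × Fin n | p.1 < p.2} : Finset _) ∪
        ({p : Fin n × Fin n | p.2 < p.1} : Finset _)) =
        (Finset.univ.sigma (fun i : Fin n => Finset.univ.erase i)).map
          (Equiv.sigmaEquivProd (Fin n) (Fin n)).toEmbedding := by
      ext ⟨i, j⟩
      simp [Equiv.sigmaEquivProd]
      omega
    rw [h4, Finset.sum_map, Finset.sum_sigma]
    refine Finset.sum_eq_zero fun i _ => ?_
    simp only [Equiv.coe_toEmbedding, Equiv.sigmaEquivProd_apply, Finset.sum_const,
      Finset.card_erase_of_mem (Finset.mem_univ i), Finset.card_univ, Fintype.card_fin]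
    obtain ⟨k, hk⟩ := hodd
    have hk' : n - 1 = k + k := by omega
    rw [hk', add_nsmul, hQ]
  simp only [sub_sub]
  rw [Finset.sum_sub_distrib, h1, h2, sub_zero]

variable {R n}

theorem wedgePair_eq {M : Type*} [AddCommGroup M] [Module R M] (x y : M) :
    wedgePair (R := R) x y = exteriorPower.ιMulti R 2 ![x, y] := rfl

theorem wedgePair_self {M : Type*} [AddCommGroup M] [Module R M] (x : M) :
    wedgePair (R := R) x x = 0 := by
  rw [wedgePair_eq]
  exact AlternatingMap.map_eq_zero_of_eq _ _ (i := 0) (j := 1) rfl (by decide)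

theorem wedgePair_add_left {M : Type*} [AddCommGroup M] [Module R M] (x x' y : M) :
    wedgePair (R := R) (x + x') y = wedgePair x y + wedgePair x' y := by
  simp only [wedgePair_eq]
  have := (exteriorPower.ιMulti R 2 (M := M)).map_update_add ![x, y] 0 x x'
  have h (z : M) : Function.update ![x, y] 0 z = ![z, y] := by
    ext i; fin_cases i <;> rfl
  rwa [h, h, h] at this

theorem wedgePair_add_right {M : Type*} [AddCommGroup M] [Module R M] (x y y' : M) :
    wedgePair (R := R) x (y + y') = wedgePair x y + wedgePair x y' := by
  simp only [wedgePair_eq]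
  have := (exteriorPower.ιMulti R 2 (M := M)).map_update_add ![x, y] 1 y y'
  have h (z : M) : Function.update ![x, y] 1 z = ![x, z] := by
    ext i; fin_cases i <;> rfl
  rwa [h, h, h] at this

theorem wedgePair_swap {M : Type*} [AddCommGroup M] [Module R M] (x y : M) :
    wedgePair (R := R) x y = - wedgePair y x := by
  have h := wedgePair_self (R := R) (x + y)
  rw [wedgePair_add_left, wedgePair_add_right, wedgePair_add_right, wedgePair_self,
    wedgePair_self, zero_add, add_zero] at h
  exact eq_neg_of_add_eq_zero_left h

theorem wedgePair_zero_left {M : Type*} [AddCommGroup M] [Module R M] (y : M) :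
    wedgePair (R := R) 0 y = 0 := by
  have h := wedgePair_add_left (R := R) 0 0 y
  rw [add_zero] at h
  exact left_eq_add.1 h

theorem wedgePair_neg_left {M : Type*} [AddCommGroup M] [Module R M] (x y : M) :
    wedgePair (R := R) (-x) y = - wedgePair x y := by
  have h := wedgePair_add_left (R := R) (-x) x y
  rw [neg_add_cancel, wedgePair_zero_left] at h
  exact eq_neg_of_add_eq_zero_left h.symm

theorem wedgePair_sub_sub {M : Type*} [AddCommGroup M] [Module R M] (x y z : M) :
    wedgePair (R := R) (x - z) (y - z) = wedgePair x y - wedgePair x z - wedgePair z y := by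
  have hr : ∀ u v : M, wedgePair (R := R) u (-v) = - wedgePair u v := by
    intro u v
    rw [wedgePair_swap, wedgePair_neg_left, wedgePair_swap v u, neg_neg]
  rw [sub_eq_add_neg, sub_eq_add_neg, wedgePair_add_left, wedgePair_add_right,
    wedgePair_add_right, hr, hr, wedgePair_neg_left, wedgePair_neg_left, wedgePair_self]
  abel

theorem exteriorPowerMap_wedgePair {M : Type*} [AddCommGroup M] [Module R M] (f : M →ₗ[R] M)
    (x y : M) : exteriorPowerMap 2 f (wedgePair x y) = wedgePair (f x) (f y) := by
  apply Subtype.ext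
  simp only [exteriorPowerMap, wedgePair, LinearMap.coe_restrict_apply]
  rw [AlgHom.toLinearMap_apply, ExteriorAlgebra.map_apply_ιMulti]
  congr 1
  ext i
  fin_cases i <;> rfl

theorem spechtE_zero (h0 : 0 < n) : spechtE R n h0 ⟨0, h0⟩ = 0 := by
  apply Subtype.ext
  simp [spechtE]

theorem spechtPerm_spechtE (h0 : 0 < n) (σ : Equiv.Perm (Fin n)) (i : Fin n) :
    spechtPerm R n σ (spechtE R n h0 i) =
      spechtE R n h0 (σ i) - spechtE R n h0 (σ ⟨0, h0⟩) := by
  apply Subtype.ext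
  funext j
  simp only [spechtPerm, spechtE, LinearMap.coe_restrict_apply, LinearMap.funLeft_apply,
    Submodule.coe_sub, Pi.sub_apply, Pi.single_apply, Equiv.Perm.inv_eq_iff_eq]
  ring_nf

theorem spechtE_span (h0 : 0 < n) :
    Submodule.span R (Set.range (spechtE R n h0)) = ⊤ := by
  rw [eq_top_iff]
  rintro x -
  have : x = ∑ i, x.1 i • spechtE R n h0 i := by
    apply Subtype.ext
    have hx : ∑ i, x.1 i = 0 := by
      have := x.2
      simpa [spechtW, sumFunctional] using this
    funext j
    simp [spechtE, Finset.sum_apply, mul_sub, Finset.sum_sub_distrib, Pi.single_apply, hx]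
  rw [this]
  exact Submodule.sum_mem _ fun i _ => Submodule.smul_mem _ _ (Submodule.subset_span ⟨i, rfl⟩)

theorem spechtBB_span (h0 : 0 < n) :
    Submodule.span R (Set.range fun q : PairIdx n => spechtBB R n h0 q.1.1 q.1.2) = ⊤ := by
  rw [eq_top_iff, ← exteriorPower.ιMulti_span_of_span R 2 _ (spechtE_span (R := R) h0),
    Submodule.span_le]
  rintro _ ⟨a, ha, rfl⟩
  obtain ⟨i, hi⟩ := ha ⟨0, rfl⟩
  obtain ⟨j, hj⟩ := ha ⟨1, rfl⟩
  have : exteriorPower.ιMulti R 2 a = spechtBB R n h0 i j := by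
    rw [spechtBB, wedgePair_eq, hi, hj]
    congr 1
    ext k
    fin_cases k <;> rfl
  rw [this, SetLike.mem_coe]
  have hlt : ∀ i j : Fin n, i < j → spechtBB R n h0 i j ∈
      Submodule.span R (Set.range fun q : PairIdx n => spechtBB R n h0 q.1.1 q.1.2) := by
    intro i j hij
    by_cases hi0 : i.val = 0
    · have : i = ⟨0, h0⟩ := Fin.ext hi0
      rw [spechtBB, this, spechtE_zero, wedgePair_zero_left]
      exact Submodule.zero_mem _
    · exact Submodule.subset_span ⟨⟨(i, j), Nat.pos_of_ne_zero hi0, hij⟩, rfl⟩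
  rcases lt_trichotomy i j with h | h | h
  · exact hlt _ _ h
  · rw [spechtBB, h, wedgePair_self]
    exact Submodule.zero_mem _
  · rw [spechtBB, wedgePair_swap]
    exact Submodule.neg_mem _ (hlt _ _ h)

/-- The coordinate functional `x ∧ y ↦ x_i y_j - x_j y_i`. -/
def coordFun (i j : Fin n) : ⋀[R]^2 ↥(spechtW R n) →ₗ[R] R :=
  exteriorPower.alternatingMapLinearEquiv
    ((Matrix.detRowAlternating (n := Fin 2) (R := R)).compLinearMap
      ((LinearMap.funLeft R R ![i, j]).comp (spechtW R n).subtype))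

theorem coordFun_wedgePair (i j : Fin n) (x y : ↥(spechtW R n)) :
    coordFun i j (wedgePair x y) = x.1 i * y.1 j - x.1 j * y.1 i := by
  rw [coordFun, wedgePair_eq, exteriorPower.alternatingMapLinearEquiv_apply_ιMulti]
  rw [AlternatingMap.compLinearMap_apply]
  exact Matrix.det_fin_two _

theorem spechtBB_li (h0 : 0 < n) :
    LinearIndependent R (fun q : PairIdx n => spechtBB R n h0 q.1.1 q.1.2) := by
  rw [Fintype.linearIndependent_iff]
  intro g hg q
  have h := congrArg (coordFun q.1.1 q.1.2) hg
  rw [map_sum, map_zero, Finset.sum_eq_single q] at h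
  · rw [map_smul, spechtBB, coordFun_wedgePair] at h
    obtain ⟨⟨i, j⟩, hi, hij⟩ := q
    have e1 : i ≠ ⟨0, h0⟩ := fun h => by simp [h] at hi
    have e2 : j ≠ ⟨0, h0⟩ := fun h => by simp [h] at hij
    have e3 : i ≠ j := fun h => by simp [h] at hij
    simpa [spechtE, Pi.single_apply, e1, e2, e3, e3.symm] using h
  · intro r _ hr
    rw [map_smul, spechtBB, coordFun_wedgePair]
    obtain ⟨⟨i, j⟩, hi, hij⟩ := q
    obtain ⟨⟨k, l⟩, hk, hkl⟩ := r
    have e1 : i ≠ ⟨0, h0⟩ := fun h => by simp [h] at hi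
    have e2 : j ≠ ⟨0, h0⟩ := fun h => by simp [h] at hij
    have e3 : ¬ (i = k ∧ j = l) := fun h => hr (by
      obtain ⟨rfl, rfl⟩ := h; rfl)
    have e4 : ¬ (j = k ∧ i = l) := by
      rintro ⟨rfl, rfl⟩
      exact absurd hij (not_lt.2 hkl.le)
    simp only [spechtE, Pi.sub_apply, Pi.single_apply, e1, e2, if_false, sub_zero, smul_eq_mul,
      ← ite_and, mul_ite, mul_one, mul_zero]
    rw [if_neg (fun h => e3 ⟨h.2, h.1⟩), if_neg (fun h => e4 ⟨h.2, h.1⟩)]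
    simp
  · intro h; exact absurd (Finset.mem_univ _) h

theorem sum_pairIdx {Q : Type*} [AddCommMonoid Q] (h0 : 0 < n) (f : Fin n → Fin n → Q)
    (hf : ∀ j, f ⟨0, h0⟩ j = 0) :
    ∑ q : PairIdx n, f q.1.1 q.1.2 = ∑ p : Fin n × Fin n with p.1 < p.2, f p.1 p.2 := by
  have h1 : ∑ q : PairIdx n, f q.1.1 q.1.2 =
      ∑ p : Fin n × Fin n with (0 < p.1.val ∧ p.1.val < p.2.val), f p.1 p.2 :=
    (Finset.sum_subtype (p := fun q : Fin n × Fin n => 0 < q.1.val ∧ q.1.val < q.2.val) _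
      (by simp) (fun p : Fin n × Fin n => f p.1 p.2)).symm
  rw [h1]
  refine Finset.sum_subset ?_ ?_
  · intro p hp
    simp only [Finset.mem_filter, Finset.mem_univ, true_and] at hp ⊢
    exact hp.2
  · intro p hp hp'
    simp only [Finset.mem_filter, Finset.mem_univ, true_and] at hp hp'
    have : p.1 = ⟨0, h0⟩ := by
      apply Fin.ext
      by_contra h
      exact hp' ⟨Nat.pos_of_ne_zero h, hp⟩
    rw [this, hf]

theorem aux_perm_mod {M : Type*} [AddCommGroup M] [Module R M] (hodd : Odd n)
    (f : Fin n → Fin n → M) (hf : ∀ i j, f i j = - f j i) (h0 : 0 < n)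
    (hz : ∀ j, f ⟨0, h0⟩ j = 0) (s : Fin n) (σ : Equiv.Perm (Fin n)) (F : M →ₗ[R] M)
    (hF : ∀ i j, F (f i j) = f (σ i) (σ j) - f (σ i) s - f s (σ j)) :
    ∃ y, F (∑ q : PairIdx n, f q.1.1 q.1.2) = ∑ q : PairIdx n, f q.1.1 q.1.2 + (2 : R) • y := by
  set N : Submodule R M := LinearMap.range (LinearMap.lsmul R M (2 : R)) with hN
  have hQ : ∀ x : M ⧸ N, x + x = 0 := by
    intro x
    obtain ⟨x, rfl⟩ := N.mkQ_surjective x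
    rw [← map_add, Submodule.mkQ_apply, Submodule.Quotient.mk_eq_zero]
    exact ⟨x, by simp [two_smul]⟩
  have key := aux_perm hQ n hodd (fun i j => N.mkQ (f i j)) (by
    intro i j
    change N.mkQ (f i j) = N.mkQ (f j i)
    rw [hf i j, map_neg]
    exact neg_eq_of_add_eq_zero_left (hQ _)) s σ
  have hmem : F (∑ q : PairIdx n, f q.1.1 q.1.2) - ∑ q : PairIdx n, f q.1.1 q.1.2 ∈ N := by
    rw [← Submodule.Quotient.mk_eq_zero, ← Submodule.mkQ_apply, map_sub, sub_eq_zero,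
      sum_pairIdx h0 _ hz, map_sum, map_sum, map_sum, ← key]
    refine Finset.sum_congr rfl fun p _ => ?_
    rw [hF, map_sub, map_sub]
  obtain ⟨y, hy⟩ := hmem
  refine ⟨y, ?_⟩
  rw [LinearMap.lsmul_apply] at hy
  rw [hy]
  abel

theorem specht_perm_sum (h0 : 0 < n) (hodd : Odd n) (σ : Equiv.Perm (Fin n)) :
    ∃ y, exteriorPowerMap 2 (spechtPerm R n σ)
        (∑ q : PairIdx n, spechtBB R n h0 q.1.1 q.1.2) =
      ∑ q : PairIdx n, spechtBB R n h0 q.1.1 q.1.2 + (2 : R) • y := by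
  refine aux_perm_mod hodd (spechtBB R n h0) (fun i j => wedgePair_swap _ _) h0 ?_
    (σ ⟨0, h0⟩) σ _ ?_
  · intro j
    rw [spechtBB, spechtE_zero, wedgePair_zero_left]
  · intro i j
    simp only [spechtBB]
    rw [exteriorPowerMap_wedgePair, spechtPerm_spechtE, spechtPerm_spechtE, wedgePair_sub_sub]

end Aux

set_option synthInstance.maxHeartbeats 1000000 in
set_option maxHeartbeats 1000000 in
/-- Let `n ≥ 5` be odd and let `S = S^{(n-2,1,1)}_{ℤ₂} = ⋀²(S^{(n-1,1)}_{ℤ₂})` be the Specht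
`ℤ₂𝔖_n`-lattice with standard basis `{b(i₁,i₂) : 2 ≤ i₁ < i₂ ≤ n}`.  Then the set
`S₂ = {Σ α(i₁,i₂)·b(i₁,i₂) : α(i₁,i₂) ≡ α(n−1,n) mod 2 for all (i₁,i₂)}` equals
`ℤ₂·(Σ b(i₁,i₂)) + 2S`, is a `ℤ₂𝔖_n`-submodule of `S` containing `2S`, and has `ℤ₂`-basis
`{Σ b(j₁,j₂)} ∪ {2·b(i₁,i₂) : (i₁,i₂) ≠ (n−1,n)}`. -/
theorem specht_sublattice_S2 (n : ℕ) (hn : 5 ≤ n) (hodd : Odd n) :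
    ∃ S₂ : Submodule ℤ_[2] (⋀[ℤ_[2]]^2 ↥(spechtW ℤ_[2] n)),
      (S₂ : Set (⋀[ℤ_[2]]^2 ↥(spechtW ℤ_[2] n))) =
        {x | ∃ α : PairIdx n → ℤ_[2],
          x = ∑ q : PairIdx n, α q • spechtBB ℤ_[2] n (by omega) q.1.1 q.1.2 ∧
          ∀ q : PairIdx n, ∃ c : ℤ_[2], α q = α (pairMax n (by omega)) + 2 * c} ∧
      S₂ = Submodule.span ℤ_[2]
            {∑ q : PairIdx n, spechtBB ℤ_[2] n (by omega) q.1.1 q.1.2}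
          ⊔ Ideal.span {(2 : ℤ_[2])} • (⊤ : Submodule ℤ_[2] (⋀[ℤ_[2]]^2 ↥(spechtW ℤ_[2] n))) ∧
      Ideal.span {(2 : ℤ_[2])} • (⊤ : Submodule ℤ_[2] (⋀[ℤ_[2]]^2 ↥(spechtW ℤ_[2] n))) ≤ S₂ ∧
      (∀ (σ : Equiv.Perm (Fin n)), ∀ x ∈ S₂,
        exteriorPowerMap 2 (spechtPerm ℤ_[2] n σ) x ∈ S₂) ∧
      LinearIndependent ℤ_[2] (fun q : PairIdx n =>
        if q = pairMax n (by omega) then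
          ∑ r : PairIdx n, spechtBB ℤ_[2] n (by omega) r.1.1 r.1.2
        else (2 : ℤ_[2]) • spechtBB ℤ_[2] n (by omega) q.1.1 q.1.2) ∧
      Submodule.span ℤ_[2] (Set.range (fun q : PairIdx n =>
        if q = pairMax n (by omega) then
          ∑ r : PairIdx n, spechtBB ℤ_[2] n (by omega) r.1.1 r.1.2
        else (2 : ℤ_[2]) • spechtBB ℤ_[2] n (by omega) q.1.1 q.1.2)) = S₂ := by
  exact aux_abstract (by norm_num) (fun q : PairIdx n => spechtBB ℤ_[2] n (by omega) q.1.1 q.1.2)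
    (pairMax n (by omega)) (spechtBB_li (by omega)) (spechtBB_span (by omega))
    (fun σ : Equiv.Perm (Fin n) => exteriorPowerMap 2 (spechtPerm ℤ_[2] n σ))
    (fun σ => specht_perm_sum (by omega) hodd σ)

end
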